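/- arXiv:1709.00900 — 3 statements merged into one kernel-verified Lean document; each statement's English description precedes it below -/
import Mathlib

section
/- Let L be a type with decidable equality, let D be a finite multiset of finsets of L (an itemset database), and let I be a finset of L. Then the number of transactions t ∈ D (with multiplicity) with I ⊆ t equals the number of transactions t ∈ D with Star(I) ≤ Star(t), where ≤ is edge-wise containment of simple graphs on Option L. In other words, the support of the itemset I in D equals the support of the star graph Star(I) in the database {Star(t) : t ∈ D}. -/
open scoped Classical in
/-- The support of a pattern `p` in a database `D`: the number of transactions
`t ∈ D` (with multiplicity) such that `p ⊑ t`. -/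
noncomputable def supp {α : Type*} [PartialOrder α] (p : α) (D : Multiset α) : ℕ :=
  Multiset.countP (fun t => p ≤ t) D

/-- The star graph of a finset `I`: the simple graph on `Option L` in which
`none` (the root `r`) is adjacent to `some i` exactly when `i ∈ I`, and there
are no other adjacencies. -/
def StarGraph {L : Type*} (I : Finset L) : SimpleGraph (Option L) :=
  SimpleGraph.fromRel (fun x y => x = none ∧ ∃ i ∈ I, y = some i)

/-- Edge-wise containment of star graphs is inclusion of their leaf sets. -/
theorem starGraph_le_starGraph_iff {L : Type*} {I J : Finset L} :
    StarGraph I ≤ StarGraph J ↔ I ≤ J := by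
  constructor
  · intro h i hi
    have hadj : (StarGraph I).Adj none (some i) := by simp [StarGraph, hi]
    simpa [StarGraph] using h hadj
  · intro h x y hxy
    simp only [StarGraph, SimpleGraph.fromRel_adj] at hxy ⊢
    exact ⟨hxy.1, hxy.2.imp (fun ⟨hx, i, hi, hy⟩ => ⟨hx, i, h hi, hy⟩)
      (fun ⟨hy, i, hi, hx⟩ => ⟨hy, i, h hi, hx⟩)⟩

/-- The support of the itemset `I` in the database `D` (the number of
transactions `t ∈ D` with `I ⊆ t`, counted with multiplicity) equals the
support of the star graph `StarGraph I` in the database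
`{StarGraph t : t ∈ D}`, where graphs are ordered edge-wise. -/
theorem stmt5 {L : Type*} [DecidableEq L] (D : Multiset (Finset L)) (I : Finset L) :
    supp I D = supp (StarGraph I) (D.map StarGraph) := by
  simp only [supp, Multiset.countP_map, starGraph_le_starGraph_iff]
  rw [Multiset.countP_eq_card_filter]
  congr!
end

section
/- Reduction from maximal frequent itemset mining to maximal frequent subsequence mining: Let L be a linearly ordered type with decidable equality, let D be a finite multiset of finsets of L, and let τ ≥ 1. Consider the sequence-mining problem whose patterns are the duplicate-free lists over L ordered by the sublist (subsequence) relation, with database {sort(t) : t ∈ D}, where sort(t) is the increasingly sorted list of the elements of t. Then: (a) a finset I is a maximal τ-frequent itemset of D (patterns are all finsets of L ordered by ⊆) if and only if sort(I) is a maximal τ-frequent duplicate-free list of the mapped database; and (b) every maximal τ-frequent duplicate-free list of the mapped database equals sort(I) for some finset I of L. -/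
open scoped Classical in
/-- The support of a pattern `p` in a database `D` with respect to the
containment relation `r`: the number of transactions `t ∈ D` (with
multiplicity) such that `r p t`. -/
noncomputable def suppR {α : Type*} (r : α → α → Prop) (p : α) (D : Multiset α) : ℕ :=
  Multiset.countP (fun t => r p t) D

/-- The set of maximal `τ`-frequent patterns of the database `D` with pattern
set `P`, with respect to the (partial order) containment relation `r`:
patterns `p ∈ P` that are `τ`-frequent and such that no strictly larger
pattern `q ∈ P` is `τ`-frequent. -/
def MaxFreqR {α : Type*} (r : α → α → Prop) (P : Set α) (D : Multiset α) (τ : ℕ) : Set α :=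
  {p | p ∈ P ∧ τ ≤ suppR r p D ∧ ∀ q ∈ P, r p q → p ≠ q → suppR r q D < τ}

theorem Finset.sort_sublist_sort_iff {L : Type*} [LinearOrder L] {s t : Finset L} :
    (s.sort (· ≤ ·)).Sublist (t.sort (· ≤ ·)) ↔ s ⊆ t := by
  constructor
  · intro h a ha
    exact (t.mem_sort (· ≤ ·)).1 (h.subset ((s.mem_sort (· ≤ ·)).2 ha))
  · intro h
    refine List.sublist_of_subperm_of_pairwise ?_ (s.pairwise_sort _) (t.pairwise_sort _)
    refine List.subperm_of_subset (s.sort_nodup _) fun a ha => ?_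
    exact (t.mem_sort (· ≤ ·)).2 (h ((s.mem_sort (· ≤ ·)).1 ha))

/-- Every subsequence of the sorted list of a finset is the sorted list of a finset. -/
theorem List.Sublist.exists_finset_sort_eq {L : Type*} [LinearOrder L] {S : List L}
    {t : Finset L} (h : S.Sublist (t.sort (· ≤ ·))) :
    ∃ I : Finset L, I.sort (· ≤ ·) = S :=
  ⟨S.toFinset, (List.toFinset_sort (· ≤ ·) (h.nodup (t.sort_nodup _))).2
    ((t.pairwise_sort _).sublist h)⟩

theorem suppR_map {α β : Type*} {r : α → α → Prop} {r' : β → β → Prop} {f : α → β}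
    (hf : ∀ a b, r' (f a) (f b) ↔ r a b) (p : α) (D : Multiset α) :
    suppR r' (f p) (D.map f) = suppR r p D := by
  classical
  simp only [suppR, Multiset.countP_map, hf, ← Multiset.countP_eq_card_filter]

theorem exists_mem_of_suppR_pos {α : Type*} {r : α → α → Prop} {p : α} {D : Multiset α}
    (h : 0 < suppR r p D) : ∃ t ∈ D, r p t := by
  classical
  exact Multiset.countP_pos.1 h

/-- Every list of positive support in a database of sorted lists is itself a sorted list. -/
theorem exists_sort_eq_of_suppR_pos {L : Type*} [LinearOrder L] {D : Multiset (Finset L)}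
    {S : List L} (h : 0 < suppR List.Sublist S (D.map fun t => t.sort (· ≤ ·))) :
    ∃ I : Finset L, I.sort (· ≤ ·) = S := by
  obtain ⟨u, hu, hS⟩ := exists_mem_of_suppR_pos h
  obtain ⟨t, -, rfl⟩ := Multiset.mem_map.1 hu
  exact hS.exists_finset_sort_eq

/-- Reduction from maximal frequent itemset mining to maximal frequent
subsequence mining: for `τ ≥ 1`, a finset `I` is a maximal `τ`-frequent
itemset of `D` iff its increasingly sorted list is a maximal `τ`-frequent
duplicate-free list (w.r.t. the sublist relation) of the mapped database, and
every maximal `τ`-frequent duplicate-free list of the mapped database is the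
sorted list of some finset. -/
theorem stmt8 {L : Type*} [LinearOrder L] [DecidableEq L]
    (D : Multiset (Finset L)) (τ : ℕ) (hτ : 1 ≤ τ) :
    (∀ I : Finset L,
      I ∈ MaxFreqR (· ⊆ ·) (Set.univ : Set (Finset L)) D τ ↔
      I.sort (· ≤ ·) ∈ MaxFreqR List.Sublist {S : List L | S.Nodup}
        (D.map (fun t => t.sort (· ≤ ·))) τ) ∧
    (∀ S ∈ MaxFreqR List.Sublist {S : List L | S.Nodup}
        (D.map (fun t => t.sort (· ≤ ·))) τ,
      ∃ I : Finset L, I.sort (· ≤ ·) = S) := by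
  have supp_sort (I : Finset L) :
      suppR List.Sublist (I.sort (· ≤ ·)) (D.map fun t => t.sort (· ≤ ·)) =
        suppR (· ⊆ ·) I D :=
    suppR_map (f := fun t : Finset L => t.sort (· ≤ ·))
      (fun _ _ => Finset.sort_sublist_sort_iff) I D
  refine ⟨fun I => ⟨?_, ?_⟩, fun S hS => exists_sort_eq_of_suppR_pos (hτ.trans hS.2.1)⟩
  · rintro ⟨-, hI, hmax⟩
    refine ⟨I.sort_nodup _, (supp_sort I).symm ▸ hI, fun S _ hIS hne => ?_⟩
    by_contra! hS
    obtain ⟨J, rfl⟩ := exists_sort_eq_of_suppR_pos (hτ.trans hS)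
    rw [supp_sort] at hS
    exact (hmax J trivial (Finset.sort_sublist_sort_iff.1 hIS)
      fun h => hne (h ▸ rfl)).not_ge hS
  · rintro ⟨-, hI, hmax⟩
    refine ⟨trivial, supp_sort I ▸ hI, fun J _ hIJ hne => ?_⟩
    rw [← supp_sort]
    refine hmax _ (J.sort_nodup _) (Finset.sort_sublist_sort_iff.2 hIJ) fun h => hne ?_
    rw [← I.sort_toFinset (· ≤ ·), h, J.sort_toFinset]
end

section
/- Characterization of the subsequence relation for duplicate-free lists via precedence pairs: Let S and T be duplicate-free lists over a type α with decidable equality. Then S is a sublist (subsequence) of T if and only if both of the following hold: (i) every element of S is an element of T, and (ii) for all a, b ∈ α, if a occurs strictly before b in S (i.e., there are indices i < j with S.get i = a and S.get j = b), then a occurs strictly before b in T. -/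
/-- `a` occurs strictly before `b` in the list `S`: there are indices `i < j`
with `S.get i = a` and `S.get j = b`. -/
def Precedes {α : Type*} (S : List α) (a b : α) : Prop :=
  ∃ i j : Fin S.length, (i : ℕ) < (j : ℕ) ∧ S.get i = a ∧ S.get j = b

/-- Characterization of the subsequence relation for duplicate-free lists via
precedence pairs: `S` is a sublist of `T` iff every element of `S` is an
element of `T` and every precedence pair of `S` is a precedence pair of `T`. -/
theorem stmt15 {α : Type*} [DecidableEq α] (S T : List α)
    (hS : S.Nodup) (hT : T.Nodup) :
    S.Sublist T ↔
      ((∀ a ∈ S, a ∈ T) ∧ ∀ a b : α, Precedes S a b → Precedes T a b) := by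
  rw [List.sublist_iff_exists_fin_orderEmbedding_get_eq]
  constructor
  · rintro ⟨f, hf⟩
    refine ⟨fun a ha => ?_, ?_⟩
    · obtain ⟨i, rfl⟩ := List.mem_iff_get.mp ha
      exact hf i ▸ List.get_mem T (f i)
    · rintro _ _ ⟨i, j, hij, rfl, rfl⟩
      exact ⟨f i, f j, f.lt_iff_lt.mpr hij, (hf i).symm, (hf j).symm⟩
  · rintro ⟨hmem, hprec⟩
    choose f hf using fun i => List.mem_iff_get.mp (hmem _ (List.get_mem S i))
    have hmono : StrictMono f := fun i j hij => by
      obtain ⟨p, q, hpq, hp, hq⟩ := hprec _ _ ⟨i, j, hij, rfl, rfl⟩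
      rwa [hT.injective_get ((hf i).trans hp.symm), hT.injective_get ((hf j).trans hq.symm)]
    exact ⟨OrderEmbedding.ofStrictMono f hmono, fun i => (hf i).symm⟩
end
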